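/- Let H be a complex Banach space, let L : H → H be a continuous linear operator whose spectral radius equals a real number ρ with ρ > 1, and let F : H → H be a map with F(0) = 0 such that there exist a > 0, b > 0 and p > 0 with ‖F(u) − L u‖ ≤ b·‖u‖^{1+p} whenever ‖u‖ ≤ a. Then the equilibrium 0 of the iteration u_{n+1} = F(u_n) is exponentially unstable at rate ρ; that is, there exist ε > 0 and C > 0 such that for every δ > 0 there is u₀ ∈ H with 0 < ‖u₀‖ ≤ δ such that the sequence defined by u_{n+1} = F(u_n) satisfies ‖u_N‖ ≥ C·ρ^N·‖u₀‖ for every N ∈ ℕ for which max{‖u₀‖, ‖u₁‖, …, ‖u_N‖} ≤ ε. -/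

import Mathlib

/-!
Choose `l` in the spectrum of `L` with `‖l‖ = ρ`. It lies on the boundary of the spectrum, so it is
an approximate eigenvalue, and there are vectors `u` of any prescribed small size whose linear orbit
`L ^ n u` stays close to `l ^ n • u` for any prescribed number `M` of steps. By Gelfand's formula
`‖L ^ n‖ ≤ K * σ ^ n` for some `σ < ρ ^ (1 + p)`. As long as `‖F^[k] u‖ ≤ 2 * ρ ^ k * ‖u‖`, the
nonlinear errors, of size `(ρ ^ k * ‖u‖) ^ (1 + p)`, therefore accumulate geometrically to
`O((ρ ^ n * ‖u‖) ^ (1 + p))`, a small fraction of `ρ ^ n * ‖u‖` while `ρ ^ n * ‖u‖` is small.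
Hence the orbit follows `l ^ n • u` until it leaves a ball whose radius does not depend on `‖u‖`.
-/

open Filter Finset Topology

/-- Exponential instability at rate `ρ` of the equilibrium `0` of the iteration `u ↦ F u`:
arbitrarily close to `0` there are starting points whose orbits grow at least like `C * ρ ^ N` for
as long as they stay in the ball of radius `ε`, with `ε` and `C` independent of the starting point.
-/
def IsExponentiallyUnstableAtZero {E : Type*} [NormedAddCommGroup E] (F : E → E) (ρ : ℝ) : Prop :=
  ∃ ε > (0 : ℝ), ∃ C > (0 : ℝ), ∀ δ > (0 : ℝ), ∃ u : E, 0 < ‖u‖ ∧ ‖u‖ ≤ δ ∧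
    ∀ N : ℕ, (∀ n ≤ N, ‖F^[n] u‖ ≤ ε) → C * ρ ^ N * ‖u‖ ≤ ‖F^[N] u‖

/-- `l` belongs to the approximate point spectrum of `L`. The defining inequality is homogeneous
in `v`, which avoids normalizing vectors. -/
def IsApproxEigenvalue {𝕜 E : Type*} [NormedField 𝕜] [NormedAddCommGroup E] [NormedSpace 𝕜 E]
    (L : E →L[𝕜] E) (l : 𝕜) : Prop :=
  ∀ c > (0 : ℝ), ∃ v ≠ 0, ‖L v - l • v‖ ≤ c * ‖v‖

section Spectrum

theorem mem_frontier_spectrum_of_nnnorm_eq_spectralRadius {𝕜 A : Type*} [RCLike 𝕜] [Ring A]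
    [Algebra 𝕜 A] {x : A} {l : 𝕜} (hl : l ∈ spectrum 𝕜 x)
    (hnorm : (‖l‖₊ : ENNReal) = spectralRadius 𝕜 x) : l ∈ frontier (spectrum 𝕜 x) := by
  have hsubset : spectrum 𝕜 x ⊆ Metric.closedBall 0 ‖l‖ := fun k hk ↦ by
    have hk_le : (‖k‖₊ : ENNReal) ≤ ‖l‖₊ :=
      hnorm ▸ le_iSup₂ (f := fun k (_ : k ∈ spectrum 𝕜 x) ↦ (‖k‖₊ : ENNReal)) k hk
    exact mem_closedBall_zero_iff.2 (by exact_mod_cast hk_le)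
  refine ⟨subset_closure hl, fun hint ↦ ?_⟩
  have hball := interior_mono hsubset hint
  rw [interior_closedBall', mem_ball_zero_iff] at hball
  exact hball.false

variable {𝕜 E : Type*} [NontriviallyNormedField 𝕜] [NormedAddCommGroup E] [NormedSpace 𝕜 E]

theorem norm_inv_le_of_bounded_below {g : (E →L[𝕜] E)ˣ} {c : ℝ} (hc : 0 < c)
    (hg : ∀ v, c * ‖v‖ ≤ ‖(g : E →L[𝕜] E) v‖) : ‖(↑g⁻¹ : E →L[𝕜] E)‖ ≤ c⁻¹ := by
  refine ContinuousLinearMap.opNorm_le_bound _ (by positivity) fun w ↦ ?_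
  have happly : (g : E →L[𝕜] E) ((↑g⁻¹ : E →L[𝕜] E) w) = w := by
    rw [← mul_apply_eq_comp, Units.mul_inv, one_apply_eq_self]
  rw [inv_mul_eq_div, le_div_iff₀' hc]
  simpa only [happly] using hg ((↑g⁻¹ : E →L[𝕜] E) w)

theorem isUnit_of_mem_closure_isUnit_of_bounded_below [CompleteSpace E] {f : E →L[𝕜] E} {c : ℝ}
    (hc : 0 < c) (hf : ∀ v, c * ‖v‖ ≤ ‖f v‖) (hclosure : f ∈ closure {g | IsUnit g}) :
    IsUnit f := by
  nontriviality E →L[𝕜] E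
  obtain ⟨_, ⟨g, rfl⟩, hfg⟩ := Metric.mem_closure_iff.1 hclosure (c / 2) (by positivity)
  rw [dist_eq_norm] at hfg
  have hg : ∀ v, c / 2 * ‖v‖ ≤ ‖(g : E →L[𝕜] E) v‖ := fun v ↦ by
    have hdiff : ‖f v - (g : E →L[𝕜] E) v‖ ≤ c / 2 * ‖v‖ := (f - g).le_of_opNorm_le hfg.le v
    linarith [hf v, norm_le_norm_add_norm_sub' (f v) ((g : E →L[𝕜] E) v)]
  have hinv : c / 2 ≤ ‖(↑g⁻¹ : E →L[𝕜] E)‖⁻¹ :=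
    (le_inv_comm₀ (by positivity) (Units.norm_pos g⁻¹)).2
      (norm_inv_le_of_bounded_below (by positivity) hg)
  exact ⟨g.ofNearby f (hfg.trans_le hinv), Units.val_ofNearby ..⟩

theorem isApproxEigenvalue_of_mem_frontier_spectrum [CompleteSpace E] {L : E →L[𝕜] E} {l : 𝕜}
    (hl : l ∈ frontier (spectrum 𝕜 L)) : IsApproxEigenvalue L l := by
  by_contra hL
  obtain ⟨c, hc, hbelow⟩ : ∃ c > (0 : ℝ), ∀ v ≠ 0, c * ‖v‖ < ‖L v - l • v‖ := by
    simpa only [IsApproxEigenvalue, not_forall, not_exists, not_and, not_le, exists_prop] using hL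
  have hclosure : algebraMap 𝕜 (E →L[𝕜] E) l - L ∈ closure {g | IsUnit g} := by
    have hres : l ∈ closure (resolventSet 𝕜 L) := by
      rw [frontier_eq_closure_inter_closure, spectrum, compl_compl] at hl
      exact hl.2
    have hcont : Continuous fun k ↦ algebraMap 𝕜 (E →L[𝕜] E) k - L := by fun_prop
    exact map_mem_closure (f := fun k ↦ algebraMap 𝕜 (E →L[𝕜] E) k - L) hcont hres fun _ hk ↦ hk
  have hmem : l ∈ spectrum 𝕜 L := (spectrum.isClosed L).frontier_subset hl
  refine hmem (isUnit_of_mem_closure_isUnit_of_bounded_below hc (fun v ↦ ?_) hclosure)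
  rcases eq_or_ne v 0 with rfl | hv
  · simp
  · simpa [Algebra.algebraMap_eq_smul_one, norm_sub_rev] using (hbelow v hv).le

theorem exists_isApproxEigenvalue_nnnorm_eq_spectralRadius {E : Type*} [NormedAddCommGroup E]
    [NormedSpace ℂ E] [CompleteSpace E] [Nontrivial E] (L : E →L[ℂ] E) :
    ∃ l : ℂ, IsApproxEigenvalue L l ∧ (‖l‖₊ : ENNReal) = spectralRadius ℂ L := by
  obtain ⟨l, hl, hnorm⟩ := spectrum.exists_nnnorm_eq_spectralRadius L
  exact ⟨l, isApproxEigenvalue_of_mem_frontier_spectrum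
    (mem_frontier_spectrum_of_nnnorm_eq_spectralRadius hl hnorm), hnorm⟩

theorem exists_norm_pow_le_of_spectralRadius_lt {A : Type*} [NormedRing A] [NormedAlgebra ℂ A]
    [CompleteSpace A] {x : A} {σ : ℝ} (hσ : spectralRadius ℂ x < ENNReal.ofReal σ) :
    ∃ K : ℝ, ∀ n : ℕ, ‖x ^ n‖ ≤ K * σ ^ n := by
  have hσ0 : 0 < σ := ENNReal.ofReal_pos.1 (bot_le.trans_lt hσ)
  have heventually : ∀ᶠ n : ℕ in atTop, ‖x ^ n‖ ≤ σ ^ n := by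
    have hgelfand := spectrum.pow_norm_pow_one_div_tendsto_nhds_spectralRadius x
    filter_upwards [hgelfand.eventually_lt_const hσ, eventually_ne_atTop 0] with n hroot hn
    have hroot : ‖x ^ n‖ ^ (1 / n : ℝ) ≤ σ := ((ENNReal.ofReal_lt_ofReal_iff hσ0).1 hroot).le
    simpa only [one_div, Real.rpow_inv_natCast_pow (norm_nonneg _) hn] using
      pow_le_pow_left₀ (by positivity) hroot n
  obtain ⟨K, -, hbound⟩ := Asymptotics.bound_of_isBigO_nat_atTop
    (Asymptotics.IsBigO.of_bound' (f := fun n ↦ x ^ n) (g := fun n ↦ σ ^ n)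
      (heventually.mono fun n hn ↦ hn.trans (Real.le_norm_self _)))
  exact ⟨K, fun n ↦ by
    simpa only [Real.norm_of_nonneg (pow_pos hσ0 n).le] using hbound (pow_pos hσ0 n).ne'⟩

end Spectrum

namespace IsApproxEigenvalue

variable {𝕜 E : Type*} [NontriviallyNormedField 𝕜] [NormedAddCommGroup E] [NormedSpace 𝕜 E]
  {L : E →L[𝕜] E} {l : 𝕜}

theorem exists_forall_le_norm_pow_sub_le (h : IsApproxEigenvalue L l) (M : ℕ) {c : ℝ}
    (hc : 0 < c) : ∃ v ≠ 0, ∀ n ≤ M, ‖(L ^ n) v - l ^ n • v‖ ≤ c * ‖v‖ := by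
  let Q (n : ℕ) : E →L[𝕜] E := ∑ i ∈ range n, L ^ i * algebraMap 𝕜 (E →L[𝕜] E) l ^ (n - 1 - i)
  have hcomm : Commute L (algebraMap 𝕜 (E →L[𝕜] E) l) := (Algebra.commutes l L).symm
  have hfactor (n : ℕ) (v : E) : (L ^ n) v - l ^ n • v = Q n (L v - l • v) := by
    simpa [Q, Algebra.algebraMap_eq_smul_one, smul_pow] using
      (DFunLike.congr_fun (hcomm.geom_sum₂_mul n) v).symm
  obtain ⟨A, hA⟩ := ((Set.finite_Iic M).image fun n ↦ ‖Q n‖).bddAbove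
  have hQ (n : ℕ) (hn : n ≤ M) : ‖Q n‖ ≤ A := hA ⟨n, hn, rfl⟩
  have hA0 : 0 ≤ A := (norm_nonneg _).trans (hQ 0 M.zero_le)
  obtain ⟨v, hv, hLv⟩ := h (c / (A + 1)) (by positivity)
  refine ⟨v, hv, fun n hn ↦ ?_⟩
  calc ‖(L ^ n) v - l ^ n • v‖ = ‖Q n (L v - l • v)‖ := by rw [hfactor]
    _ ≤ (A + 1) * (c / (A + 1) * ‖v‖) :=
      (Q n).le_of_opNorm_le_of_le ((hQ n hn).trans (by linarith)) hLv
    _ = c * ‖v‖ := by field_simp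

theorem exists_mem_shell_forall_le_norm_pow_sub_le (h : IsApproxEigenvalue L l) (hl : 1 < ‖l‖)
    (M : ℕ) {c r : ℝ} (hc : 0 < c) (hr : 0 < r) :
    ∃ u, r / ‖l‖ ≤ ‖u‖ ∧ ‖u‖ < r ∧ ∀ n ≤ M, ‖(L ^ n) u - l ^ n • u‖ ≤ c * ‖u‖ := by
  obtain ⟨v, hv, hLv⟩ := h.exists_forall_le_norm_pow_sub_le M hc
  obtain ⟨d, -, hlt, hle, -⟩ := rescale_to_shell hl hr hv
  refine ⟨d • v, hle, hlt, fun n hn ↦ ?_⟩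
  rw [map_smul, smul_comm (l ^ n), ← smul_sub, norm_smul, norm_smul, mul_left_comm]
  gcongr
  exact hLv n hn

end IsApproxEigenvalue

section Perturbation

theorem sub_pow_apply_eq_sum {R M : Type*} [Ring R] [AddCommGroup M] [TopologicalSpace M]
    [Module R M] (L : M →L[R] M) (x : ℕ → M) (n : ℕ) :
    x n - (L ^ n) (x 0) = ∑ k ∈ range n, (L ^ (n - 1 - k)) (x (k + 1) - L (x k)) := by
  have htelescope := sum_range_sub (fun k ↦ (L ^ (n - k)) (x k)) n
  simp only [Nat.sub_self, Nat.sub_zero, pow_zero, one_apply_eq_self] at htelescope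
  rw [← htelescope]
  refine sum_congr rfl fun k hk ↦ ?_
  have hk : k < n := mem_range.1 hk
  rw [map_sub, ← mul_apply_eq_comp, ← pow_succ, show n - 1 - k + 1 = n - k by omega,
    show n - 1 - k = n - (k + 1) by omega]

variable {𝕜 E : Type*} [NontriviallyNormedField 𝕜] [NormedAddCommGroup E] [NormedSpace 𝕜 E]
  {L : E →L[𝕜] E} {K σ : ℝ}

theorem norm_sub_pow_apply_le (hσ : 0 ≤ σ) (hL : ∀ n : ℕ, ‖L ^ n‖ ≤ K * σ ^ n)
    {τ B : ℝ} (hστ : σ < τ) (hB : 0 ≤ B) {x : ℕ → E} {n : ℕ}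
    (hx : ∀ k < n, ‖x (k + 1) - L (x k)‖ ≤ B * τ ^ k) :
    ‖x n - (L ^ n) (x 0)‖ ≤ K * B / (τ - σ) * τ ^ n := by
  have hK : 0 ≤ K := (norm_nonneg _).trans (by simpa only [pow_zero, mul_one] using hL 0)
  have hgeom : ∑ k ∈ range n, τ ^ k * σ ^ (n - 1 - k) ≤ τ ^ n / (τ - σ) := by
    rw [le_div_iff₀ (sub_pos.2 hστ), (Commute.all τ σ).geom_sum₂_mul n]
    exact sub_le_self _ (pow_nonneg hσ n)
  have hterm (k : ℕ) (hk : k ∈ range n) : ‖(L ^ (n - 1 - k)) (x (k + 1) - L (x k))‖ ≤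
      K * B * (τ ^ k * σ ^ (n - 1 - k)) :=
    calc _ ≤ K * σ ^ (n - 1 - k) * (B * τ ^ k) :=
          (L ^ (n - 1 - k)).le_of_opNorm_le_of_le (hL _) (hx k (mem_range.1 hk))
      _ = _ := by ring
  calc ‖x n - (L ^ n) (x 0)‖
      ≤ ∑ k ∈ range n, K * B * (τ ^ k * σ ^ (n - 1 - k)) := by
        rw [sub_pow_apply_eq_sum]
        exact norm_sum_le_of_le _ hterm
    _ ≤ K * B * (τ ^ n / (τ - σ)) := by
        rw [← mul_sum]
        gcongr
    _ = K * B / (τ - σ) * τ ^ n := by ring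

variable {F : E → E} {a b p : ℝ}

theorem norm_iterate_sub_pow_apply_le (hσ : 0 ≤ σ) (hL : ∀ n : ℕ, ‖L ^ n‖ ≤ K * σ ^ n)
    (hb : 0 ≤ b) {q : ℝ} (hq : 0 ≤ q) (hF : ∀ v, ‖v‖ ≤ a → ‖F v - L v‖ ≤ b * ‖v‖ ^ q)
    {ρ s : ℝ} (hρ : 0 ≤ ρ) (hσρ : σ < ρ ^ q) (hs : 0 ≤ s) {u : E} {n : ℕ}
    (ha : ∀ k < n, s * ρ ^ k ≤ a) (hu : ∀ k < n, ‖F^[k] u‖ ≤ s * ρ ^ k) :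
    ‖F^[n] u - (L ^ n) u‖ ≤ K * b / (ρ ^ q - σ) * (s * ρ ^ n) ^ q := by
  have hrpow (k : ℕ) : (s * ρ ^ k) ^ q = s ^ q * (ρ ^ q) ^ k := by
    rw [Real.mul_rpow hs (by positivity), Real.rpow_pow_comm hρ]
  have herror (k : ℕ) (hk : k < n) :
      ‖F^[k + 1] u - L (F^[k] u)‖ ≤ b * s ^ q * (ρ ^ q) ^ k := by
    rw [Function.iterate_succ_apply', mul_assoc, ← hrpow]
    refine (hF _ ((hu k hk).trans (ha k hk))).trans ?_
    gcongr
    exact hu k hk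
  calc ‖F^[n] u - (L ^ n) u‖
      ≤ K * (b * s ^ q) / (ρ ^ q - σ) * (ρ ^ q) ^ n :=
        norm_sub_pow_apply_le hσ hL hσρ (by positivity) (x := fun k ↦ F^[k] u) herror
    _ = _ := by rw [hrpow]; ring

theorem norm_iterate_sub_pow_smul_le (hσ : 0 ≤ σ) (hL : ∀ n : ℕ, ‖L ^ n‖ ≤ K * σ ^ n)
    (hb : 0 ≤ b) (hp : 0 ≤ p) (hF : ∀ v, ‖v‖ ≤ a → ‖F v - L v‖ ≤ b * ‖v‖ ^ (1 + p))
    {l : 𝕜} (hl : 1 ≤ ‖l‖) (hσl : σ < ‖l‖ ^ (1 + p)) {r : ℝ} (hra : r ≤ a)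
    (hr : K * b / (‖l‖ ^ (1 + p) - σ) * r ^ p ≤ 1 / 8) {u : E} {M : ℕ}
    (hu : 2 * ‖u‖ * ‖l‖ ^ M ≤ r) (hLu : ∀ n ≤ M, ‖(L ^ n) u - l ^ n • u‖ ≤ 1 / 4 * ‖u‖)
    {n : ℕ} (hn : n ≤ M) : ‖F^[n] u - l ^ n • u‖ ≤ 1 / 2 * (‖l‖ ^ n * ‖u‖) := by
  induction n using Nat.strong_induction_on with
  | _ n ih =>
  have hsize (k : ℕ) (hk : k ≤ M) : 2 * ‖u‖ * ‖l‖ ^ k ≤ r := hu.trans' (by gcongr)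
  have horbit (k : ℕ) (hk : k < n) : ‖F^[k] u‖ ≤ 2 * ‖u‖ * ‖l‖ ^ k := by
    have hclose := ih k hk (hk.le.trans hn)
    have htriangle := norm_le_norm_add_norm_sub (l ^ k • u) (F^[k] u)
    rw [norm_smul, norm_pow, norm_sub_rev] at htriangle
    have : 0 ≤ ‖l‖ ^ k * ‖u‖ := by positivity
    linarith
  have hnonlinear : ‖F^[n] u - (L ^ n) u‖ ≤ 1 / 4 * (‖l‖ ^ n * ‖u‖) := by
    have hK : 0 ≤ K := (norm_nonneg _).trans (by simpa only [pow_zero, mul_one] using hL 0)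
    have : 0 ≤ K * b / (‖l‖ ^ (1 + p) - σ) := div_nonneg (by positivity) (sub_pos.2 hσl).le
    calc ‖F^[n] u - (L ^ n) u‖
        ≤ K * b / (‖l‖ ^ (1 + p) - σ) * (2 * ‖u‖ * ‖l‖ ^ n) ^ (1 + p) :=
          norm_iterate_sub_pow_apply_le hσ hL hb (by positivity) hF (by positivity) hσl
            (by positivity) (fun k hk ↦ (hsize k (hk.le.trans hn)).trans hra) horbit
      _ = K * b / (‖l‖ ^ (1 + p) - σ) * (2 * ‖u‖ * ‖l‖ ^ n) ^ p * (2 * ‖u‖ * ‖l‖ ^ n) := by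
          rw [Real.rpow_one_add' (by positivity : 0 ≤ 2 * ‖u‖ * ‖l‖ ^ n) (by positivity)]
          ring
      _ ≤ K * b / (‖l‖ ^ (1 + p) - σ) * r ^ p * (2 * ‖u‖ * ‖l‖ ^ n) := by
          gcongr
          exact hsize n hn
      _ ≤ 1 / 8 * (2 * ‖u‖ * ‖l‖ ^ n) := by gcongr
      _ = 1 / 4 * (‖l‖ ^ n * ‖u‖) := by ring
  have hlinear : ‖(L ^ n) u - l ^ n • u‖ ≤ 1 / 4 * (‖l‖ ^ n * ‖u‖) :=
    (hLu n hn).trans (by gcongr; exact le_mul_of_one_le_left (norm_nonneg u) (one_le_pow₀ hl))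
  linarith [norm_sub_le_norm_sub_add_norm_sub (F^[n] u) ((L ^ n) u) (l ^ n • u)]

theorem exists_pos_le_and_mul_rpow_le (D : ℝ) {r c q : ℝ} (hr : 0 < r) (hc : 0 < c) (hq : 0 < q) :
    ∃ t > 0, t ≤ r ∧ D * t ^ q ≤ c := by
  have hlim : Tendsto (fun t : ℝ ↦ D * t ^ q) (𝓝[>] 0) (𝓝 0) := by
    have hcont : Continuous fun t : ℝ ↦ D * t ^ q :=
      continuous_const.mul (Real.continuous_rpow_const hq.le)
    simpa [Real.zero_rpow hq.ne'] using (hcont.tendsto 0).mono_left nhdsWithin_le_nhds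
  obtain ⟨t, ht, hsmall⟩ :=
    ((eventually_mem_set.2 (Ioc_mem_nhdsGT hr)).and (hlim.eventually_le_const hc)).exists
  exact ⟨t, ht.1, ht.2, hsmall⟩

theorem IsApproxEigenvalue.isExponentiallyUnstableAtZero {l : 𝕜} (h : IsApproxEigenvalue L l)
    (hl : 1 < ‖l‖) (hσ : 0 ≤ σ) (hL : ∀ n : ℕ, ‖L ^ n‖ ≤ K * σ ^ n)
    (hσl : σ < ‖l‖ ^ (1 + p)) (ha : 0 < a) (hb : 0 ≤ b) (hp : 0 < p)
    (hF : ∀ v, ‖v‖ ≤ a → ‖F v - L v‖ ≤ b * ‖v‖ ^ (1 + p)) :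
    IsExponentiallyUnstableAtZero F ‖l‖ := by
  have : 0 < ‖l‖ := one_pos.trans hl
  obtain ⟨r, hr0, hra, hr⟩ :=
    exists_pos_le_and_mul_rpow_le (K * b / (‖l‖ ^ (1 + p) - σ)) ha (c := 1 / 8) (by norm_num) hp
  refine ⟨r / (8 * ‖l‖), by positivity, 1 / 2, by norm_num, fun δ hδ ↦ ?_⟩
  obtain ⟨M, hM⟩ := pow_unbounded_of_one_lt (r / 2 / δ) hl
  have hlM : 0 < ‖l‖ ^ M := by positivity
  obtain ⟨u, hu_ge, hu_lt, hLu⟩ := h.exists_mem_shell_forall_le_norm_pow_sub_le hl M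
    (c := 1 / 4) (by norm_num) (r := r / 2 / ‖l‖ ^ M) (by positivity)
  have hu_pos : 0 < ‖u‖ := hu_ge.trans_lt' (by positivity)
  have hu_size : 2 * ‖u‖ * ‖l‖ ^ M ≤ r := by
    rw [lt_div_iff₀ hlM] at hu_lt
    linarith
  have hgrowth (n : ℕ) (hn : n ≤ M) : 1 / 2 * ‖l‖ ^ n * ‖u‖ ≤ ‖F^[n] u‖ := by
    have hclose := norm_iterate_sub_pow_smul_le hσ hL hb hp.le hF hl.le hσl hra hr hu_size hLu hn
    have htriangle := norm_le_norm_add_norm_sub (F^[n] u) (l ^ n • u)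
    rw [norm_smul, norm_pow] at htriangle
    linarith
  have hexit : r / (8 * ‖l‖) < ‖F^[M] u‖ :=
    calc r / (8 * ‖l‖) < r / (4 * ‖l‖) := by gcongr; norm_num
      _ = 1 / 2 * ‖l‖ ^ M * (r / 2 / ‖l‖ ^ M / ‖l‖) := by field_simp; norm_num
      _ ≤ 1 / 2 * ‖l‖ ^ M * ‖u‖ := by gcongr
      _ ≤ ‖F^[M] u‖ := hgrowth M le_rfl
  refine ⟨u, hu_pos, hu_lt.le.trans ((div_lt_comm₀ hδ hlM).1 hM).le, fun N hN ↦ hgrowth N ?_⟩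
  by_contra! hMN
  exact (hN M hMN.le).not_gt hexit

end Perturbation

/-- If the spectral radius of `L` is `ρ > 1` and `F` agrees with `L` to higher order near `0`,
then the equilibrium `0` of the iteration `u_{n+1} = F(u_n)` is exponentially unstable at
rate `ρ`. -/
theorem stmt_2 {H : Type*} [NormedAddCommGroup H] [NormedSpace ℂ H] [CompleteSpace H]
    (L : H →L[ℂ] H) (ρ : ℝ) (hρ : 1 < ρ) (hspec : spectralRadius ℂ L = ENNReal.ofReal ρ)
    (F : H → H) (hF0 : F 0 = 0)
    (a b p : ℝ) (ha : 0 < a) (hb : 0 < b) (hp : 0 < p)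
    (hFL : ∀ u : H, ‖u‖ ≤ a → ‖F u - L u‖ ≤ b * ‖u‖ ^ (1 + p)) :
    ∃ ε > (0 : ℝ), ∃ C > (0 : ℝ), ∀ δ > (0 : ℝ), ∃ u₀ : H, 0 < ‖u₀‖ ∧ ‖u₀‖ ≤ δ ∧
      ∀ N : ℕ, (∀ n ≤ N, ‖F^[n] u₀‖ ≤ ε) → C * ρ ^ N * ‖u₀‖ ≤ ‖F^[N] u₀‖ := by
  have hρ0 : 0 < ρ := one_pos.trans hρ
  have : Nontrivial H := by
    refine not_subsingleton_iff_nontrivial.1 fun _ ↦ (ENNReal.ofReal_pos.2 hρ0).ne' ?_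
    rw [← hspec, spectrum.SpectralRadius.of_subsingleton]
  obtain ⟨l, hl, hlρ⟩ := exists_isApproxEigenvalue_nnnorm_eq_spectralRadius L
  obtain rfl : ‖l‖ = ρ := by
    simpa [hspec, hρ0.le] using congrArg ENNReal.toReal hlρ
  obtain ⟨σ, hρσ, hσ⟩ : ∃ σ, ‖l‖ < σ ∧ σ < ‖l‖ ^ (1 + p) :=
    exists_between (Real.self_lt_rpow_of_one_lt hρ (by linarith))
  obtain ⟨K, hL⟩ := exists_norm_pow_le_of_spectralRadius_lt (x := L) (σ := σ) <| by
    rw [hspec]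
    exact (ENNReal.ofReal_lt_ofReal_iff (hρ0.trans hρσ)).2 hρσ
  exact hl.isExponentiallyUnstableAtZero hρ (hρ0.trans hρσ).le hL hσ ha hb.le hp hFL
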